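/- arXiv:2202.05990 — 2 statements merged into one kernel-verified Lean document; each statement's English description precedes it below -/
import Mathlib

section
/- Upper bound on l_max via the out-H-index on G[k] (Theorem 4.2): let G be a finite directed graph, v a vertex, and k a natural number with k ≤ k_max(v). Let G[k] be the subgraph of G induced by the vertex set V_k = {u ∈ V : k_max(u) ≥ k}. Then l_max(v,k) ≤ oH_{G[k]}^(∞)(v), the eventual value of the non-increasing sequence n ↦ oH_{G[k]}^(n)(v). -/
open Finset

variable {V : Type*} [Fintype V] [DecidableEq V]

/-- The in-neighbors of `v` within `S`: vertices `u ∈ S` with an edge `u → v`. -/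
def inN (E : V → V → Prop) [DecidableRel E] (S : Finset V) (v : V) : Finset V :=
  S.filter (fun u => E u v)

/-- The out-neighbors of `v` within `S`: vertices `u ∈ S` with an edge `v → u`. -/
def outN (E : V → V → Prop) [DecidableRel E] (S : Finset V) (v : V) : Finset V :=
  S.filter (fun u => E v u)

/-- `S` satisfies the `(k,l)`-degree constraints: every `v ∈ S` has at least `k`
in-neighbors in `S` and at least `l` out-neighbors in `S`. -/
def satisfiesKL (E : V → V → Prop) [DecidableRel E] (k l : ℕ) (S : Finset V) : Prop :=
  ∀ v ∈ S, k ≤ (inN E S v).card ∧ l ≤ (outN E S v).card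

instance (E : V → V → Prop) [DecidableRel E] (k l : ℕ) (S : Finset V) :
    Decidable (satisfiesKL E k l S) := by unfold satisfiesKL; infer_instance

/-- The `(k,l)`-core of the graph: the union of all vertex subsets satisfying the
`(k,l)`-degree constraints. -/
def core (E : V → V → Prop) [DecidableRel E] (k l : ℕ) : Finset V :=
  (Finset.univ.powerset.filter (satisfiesKL E k l)).sup id

/-- `kmax E v`: the largest `k` such that `v` belongs to the `(k,0)`-core. -/
noncomputable def kmax (E : V → V → Prop) [DecidableRel E] (v : V) : ℕ :=
  sSup {k : ℕ | v ∈ core E k 0}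

/-- `lmax E v k`: the largest `l` such that `v` belongs to the `(k,l)`-core. -/
noncomputable def lmax (E : V → V → Prop) [DecidableRel E] (v : V) (k : ℕ) : ℕ :=
  sSup {l : ℕ | v ∈ core E k l}

/-- The H-index of a finite multiset of naturals: the largest `h` such that at least
`h` elements (with multiplicity) are `≥ h`. -/
noncomputable def hIndex (M : Multiset ℕ) : ℕ :=
  sSup {h : ℕ | h ≤ (M.filter (fun x => h ≤ x)).card}

/-- The `n`-order in-H-index of a vertex `v` in the graph with vertex set `S`
and edge relation `E`. -/
noncomputable def iH (E : V → V → Prop) [DecidableRel E] (S : Finset V) : ℕ → V → ℕ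
  | 0 => fun v => (inN E S v).card
  | n + 1 => fun v => hIndex ((inN E S v).val.map (iH E S n))

/-- The `n`-order out-H-index of a vertex `v` in the graph with vertex set `S`
and edge relation `E`. -/
noncomputable def oH (E : V → V → Prop) [DecidableRel E] (S : Finset V) : ℕ → V → ℕ
  | 0 => fun v => (outN E S v).card
  | n + 1 => fun v => hIndex ((outN E S v).val.map (oH E S n))

/-- The eventual (limit) value of the in-H-index sequence. -/
noncomputable def iHlim (E : V → V → Prop) [DecidableRel E] (S : Finset V) (v : V) : ℕ :=
  ⨅ n, iH E S n v

/-- The eventual (limit) value of the out-H-index sequence. -/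
noncomputable def oHlim (E : V → V → Prop) [DecidableRel E] (S : Finset V) (v : V) : ℕ :=
  ⨅ n, oH E S n v

/-- `(k,l)` is a skyline coreness of `v`: `v` is in the `(k,l)`-core and there is no
pair `(k',l')` strictly dominating `(k,l)` with `v` in the `(k',l')`-core. -/
def skyline (E : V → V → Prop) [DecidableRel E] (v : V) (p : ℕ × ℕ) : Prop :=
  v ∈ core E p.1 p.2 ∧
    ¬ ∃ q : ℕ × ℕ, (p.1 ≤ q.1 ∧ p.2 ≤ q.2 ∧ p ≠ q) ∧ v ∈ core E q.1 q.2

/-- The vertex set `V_k = {u : kmax(u) ≥ k}` of the induced subgraph `G[k]`. -/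
noncomputable def Vk (E : V → V → Prop) [DecidableRel E] (k : ℕ) : Finset V :=
  @Finset.filter _ (fun u => k ≤ kmax E u) (Classical.decPred _) Finset.univ

/-!
A vertex set `T` satisfying the `(k,l)`-degree constraints also satisfies the `(k,0)`-constraints,
so it lies inside `V_k`. Every vertex of `T` has at least `l` out-neighbors in `T`; hence if the
`n`-order out-H-index is at least `l` on all of `T`, then each vertex of `T` sees at least `l`
out-neighbors of value at least `l`, and the next order is again at least `l` on `T`.
-/

theorem exists_forall_ge_eq_ciInf_of_antitone {ι α : Type*} [Preorder ι] [Nonempty ι]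
    [ConditionallyCompleteLinearOrderBot α] [WellFoundedLT α] {f : ι → α} (hf : Antitone f) :
    ∃ i₀, ∀ i, i₀ ≤ i → f i = ⨅ j, f j := by
  obtain ⟨i₀, hi₀⟩ : (⨅ j, f j) ∈ Set.range f := ciInf_mem f
  exact ⟨i₀, fun i hi => ((hf hi).trans_eq hi₀).antisymm (ciInf_le (OrderBot.bddBelow _) i)⟩

section HIndex

theorem bddAbove_setOf_le_card_filter_le (M : Multiset ℕ) :
    BddAbove {h : ℕ | h ≤ (M.filter (fun x => h ≤ x)).card} :=
  ⟨M.card, fun _ hh => hh.trans (Multiset.card_le_card (Multiset.filter_le _ M))⟩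

theorem hIndex_le_card_filter (M : Multiset ℕ) :
    hIndex M ≤ (M.filter (fun x => hIndex M ≤ x)).card :=
  Nat.sSup_mem (s := {h : ℕ | h ≤ (M.filter (fun x => h ≤ x)).card})
    ⟨0, Nat.zero_le _⟩ (bddAbove_setOf_le_card_filter_le M)

theorem le_hIndex_iff {M : Multiset ℕ} {h : ℕ} :
    h ≤ hIndex M ↔ h ≤ (M.filter (fun x => h ≤ x)).card := by
  refine ⟨fun hh => ?_, fun hh => le_csSup (bddAbove_setOf_le_card_filter_le M) hh⟩
  calc
    h ≤ hIndex M := hh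
    _ ≤ (M.filter (fun x => hIndex M ≤ x)).card := hIndex_le_card_filter M
    _ ≤ (M.filter (fun x => h ≤ x)).card :=
      Multiset.card_le_card (Multiset.monotone_filter_right M fun _ hx => hh.trans hx)

theorem hIndex_le_card (M : Multiset ℕ) : hIndex M ≤ M.card :=
  (hIndex_le_card_filter M).trans (Multiset.card_le_card (Multiset.filter_le _ M))

variable {α : Type*} {s : Finset α} {f g : α → ℕ}

theorem le_hIndex_map_iff {h : ℕ} :
    h ≤ hIndex (s.val.map f) ↔ h ≤ #{a ∈ s | h ≤ f a} := by
  rw [le_hIndex_iff, Multiset.filter_map, Multiset.card_map]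
  rfl

theorem hIndex_map_le_hIndex_map (hfg : ∀ a ∈ s, f a ≤ g a) :
    hIndex (s.val.map f) ≤ hIndex (s.val.map g) :=
  le_hIndex_map_iff.2 <| (le_hIndex_map_iff.1 le_rfl).trans <|
    card_le_card <| monotone_filter_right s fun a ha hle => hle.trans (hfg a ha)

end HIndex

section OutHIndex

variable {W : Type*} {E : W → W → Prop} [DecidableRel E]

theorem outN_subset_outN {S T : Finset W} (hTS : T ⊆ S) (u : W) : outN E T u ⊆ outN E S u :=
  filter_subset_filter _ hTS

theorem oH_succ_le (S : Finset W) (n : ℕ) (u : W) : oH E S (n + 1) u ≤ oH E S n u := by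
  induction n generalizing u with
  | zero => exact (hIndex_le_card _).trans_eq (Multiset.card_map _ _)
  | succ n ih => exact hIndex_map_le_hIndex_map fun w _ => ih w

theorem antitone_oH (S : Finset W) (u : W) : Antitone fun n => oH E S n u :=
  antitone_nat_of_succ_le fun n => oH_succ_le S n u

theorem le_oH_of_forall_le_card_outN {l : ℕ} {S T : Finset W} (hTS : T ⊆ S)
    (hT : ∀ u ∈ T, l ≤ #(outN E T u)) (n : ℕ) {u : W} (hu : u ∈ T) : l ≤ oH E S n u := by
  induction n generalizing u with
  | zero => exact (hT u hu).trans (card_le_card (outN_subset_outN hTS u))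
  | succ n ih =>
    have hsub : outN E T u ⊆ {w ∈ outN E S u | l ≤ oH E S n w} := fun w hw =>
      mem_filter.2 ⟨outN_subset_outN hTS u hw, ih (mem_filter.1 hw).1⟩
    exact le_hIndex_map_iff.2 ((hT u hu).trans (card_le_card hsub))

end OutHIndex

section Core

variable {E : V → V → Prop} [DecidableRel E] {k l : ℕ} {v : V}

theorem mem_core_iff : v ∈ core E k l ↔ ∃ T, satisfiesKL E k l T ∧ v ∈ T := by
  simp [core, mem_sup]

theorem core_subset_core {k' l' : ℕ} (hk : k' ≤ k) (hl : l' ≤ l) :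
    core E k l ⊆ core E k' l' := fun u hu => by
  obtain ⟨T, hT, huT⟩ := mem_core_iff.1 hu
  exact mem_core_iff.2 ⟨T, fun w hw => ⟨hk.trans (hT w hw).1, hl.trans (hT w hw).2⟩, huT⟩

theorem le_card_of_mem_core (hv : v ∈ core E k l) : k ≤ Fintype.card V := by
  obtain ⟨T, hT, hvT⟩ := mem_core_iff.1 hv
  exact (hT v hvT).1.trans (card_le_univ _)

theorem le_kmax_of_mem_core (hv : v ∈ core E k l) : k ≤ kmax E v :=
  le_csSup ⟨Fintype.card V, fun _ hj => le_card_of_mem_core hj⟩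
    (core_subset_core le_rfl (Nat.zero_le l) hv)

theorem core_subset_Vk : core E k l ⊆ Vk E k := fun u hu => by
  simpa only [Vk, mem_filter_univ] using le_kmax_of_mem_core hu

theorem le_oHlim_of_mem_core {S : Finset V} (hS : core E k l ⊆ S) (hv : v ∈ core E k l) :
    l ≤ oHlim E S v := by
  obtain ⟨T, hT, hvT⟩ := mem_core_iff.1 hv
  have hTS : T ⊆ S := fun u hu => hS (mem_core_iff.2 ⟨T, hT, hu⟩)
  exact le_ciInf fun n => le_oH_of_forall_le_card_outN hTS (fun u hu => (hT u hu).2) n hvT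

end Core

/-- **Theorem 4.2.** For `k ≤ kmax v`, the sequence `n ↦ oH_{G[k]}^(n)(v)`
is eventually constant and `lmax(v,k)` is at most its eventual value. -/
theorem lmax_le_oHlim_Gk (E : V → V → Prop) [DecidableRel E]
    (v : V) (k : ℕ) (hk : k ≤ kmax E v) :
    (∃ N : ℕ, ∀ n : ℕ, N ≤ n → oH E (Vk E k) n v = oHlim E (Vk E k) v) ∧
    lmax E v k ≤ oHlim E (Vk E k) v := by
  constructor
  · exact exists_forall_ge_eq_ciInf_of_antitone (antitone_oH (Vk E k) v)
  · exact csSup_le' fun l hl => le_oHlim_of_mem_core core_subset_Vk hl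
end

section
/- Property 5.1(III): let G be a finite directed graph, v a vertex, and (k_v, l_v) a skyline coreness of v. Then it cannot simultaneously hold that v has at least k_v in-neighbors v' each having a skyline coreness (k',l') with k_v ≤ k' and l_v + 1 ≤ l', and that v has at least l_v + 1 out-neighbors v'' each having a skyline coreness (k'',l'') with k_v ≤ k'' and l_v + 1 ≤ l''. -/
open Finset

variable {V : Type*} [Fintype V] [DecidableEq V]

/-!
The `(k,l)`-core is itself a set satisfying the `(k,l)`-degree constraints, and it already contains
every vertex with at least `k` in-neighbors and `l` out-neighbors in it, since adjoining such a
vertex preserves the constraints. A vertex with a skyline coreness dominating `(kv, lv + 1)` lies in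
the `(kv, lv + 1)`-core, so the two neighbor bounds would put `v` in that core as well, against the
maximality of `(kv, lv)`.
-/

section DegreeConstraints

variable {W : Type*} {E : W → W → Prop} [DecidableRel E] {k l k' l' : ℕ} {S T : Finset W} {v : W}

theorem inN_mono (hST : S ⊆ T) : inN E S v ⊆ inN E T v :=
  filter_subset_filter _ hST

theorem outN_mono (hST : S ⊆ T) : outN E S v ⊆ outN E T v :=
  filter_subset_filter _ hST

theorem satisfiesKL.anti (hS : satisfiesKL E k l S) (hk : k' ≤ k) (hl : l' ≤ l) :
    satisfiesKL E k' l' S :=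
  fun u hu => ⟨hk.trans (hS u hu).1, hl.trans (hS u hu).2⟩

theorem satisfiesKL.le_card_of_subset (hS : satisfiesKL E k l S) (hST : S ⊆ T) (hv : v ∈ S) :
    k ≤ #(inN E T v) ∧ l ≤ #(outN E T v) :=
  ⟨(hS v hv).1.trans (card_le_card (inN_mono hST)),
    (hS v hv).2.trans (card_le_card (outN_mono hST))⟩

theorem satisfiesKL.insert [DecidableEq W] (hS : satisfiesKL E k l S)
    (hin : k ≤ #(inN E S v)) (hout : l ≤ #(outN E S v)) :
    satisfiesKL E k l (insert v S) := by
  have hsub := subset_insert v S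
  intro u hu
  rcases mem_insert.1 hu with rfl | hu
  · exact ⟨hin.trans (card_le_card (inN_mono hsub)), hout.trans (card_le_card (outN_mono hsub))⟩
  · exact hS.le_card_of_subset hsub hu

end DegreeConstraints

section Core

variable {E : V → V → Prop} [DecidableRel E] {k l k' l' : ℕ} {S : Finset V} {v : V}

theorem mem_core : v ∈ core E k l ↔ ∃ S, satisfiesKL E k l S ∧ v ∈ S := by
  simp [core, mem_sup]

theorem satisfiesKL.subset_core (hS : satisfiesKL E k l S) : S ⊆ core E k l :=
  fun _ hv => mem_core.2 ⟨S, hS, hv⟩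

theorem core_anti (hk : k' ≤ k) (hl : l' ≤ l) : core E k l ⊆ core E k' l' := by
  intro v hv
  obtain ⟨S, hS, hvS⟩ := mem_core.1 hv
  exact (hS.anti hk hl).subset_core hvS

theorem satisfiesKL_core : satisfiesKL E k l (core E k l) := by
  intro v hv
  obtain ⟨S, hS, hvS⟩ := mem_core.1 hv
  exact hS.le_card_of_subset hS.subset_core hvS

theorem mem_core_of_le_card (hin : k ≤ #(inN E (core E k l) v))
    (hout : l ≤ #(outN E (core E k l) v)) : v ∈ core E k l :=
  (satisfiesKL_core.insert hin hout).subset_core (mem_insert_self v _)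

end Core

section Skyline

variable {E : V → V → Prop} [DecidableRel E] {v : V} {p q : ℕ × ℕ}

theorem skyline.notMem_core_of_lt (hp : skyline E v p) (hpq : p < q) : v ∉ core E q.1 q.2 :=
  fun hv => hp.2 ⟨q, ⟨hpq.le.1, hpq.le.2, hpq.ne⟩, hv⟩

theorem ncard_skyline_le_card_filter_core (P : V → Prop) [DecidablePred P] (k l : ℕ) :
    {u | P u ∧ ∃ p : ℕ × ℕ, skyline E u p ∧ k ≤ p.1 ∧ l ≤ p.2}.ncard ≤
      #{u ∈ core E k l | P u} := by
  rw [← Set.ncard_coe_finset]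
  refine Set.ncard_le_ncard ?_ (finite_toSet _)
  rintro u ⟨hu, p, hp, hk, hl⟩
  exact mem_coe.2 (mem_filter.2 ⟨core_anti hk hl hp.1, hu⟩)

end Skyline

/-- **Property 5.1(III).** If `(kv,lv)` is a skyline coreness of `v`, then
it cannot hold simultaneously that `v` has `kv` in-neighbors with a skyline coreness
dominating `(kv, lv+1)` and `lv + 1` out-neighbors with a skyline coreness dominating
`(kv, lv+1)`. -/
theorem skyline_neighbor_property_III (E : V → V → Prop) [DecidableRel E]
    (v : V) (kv lv : ℕ) (h : skyline E v (kv, lv)) :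
    ¬(kv ≤
        Set.ncard {u : V | E u v ∧ ∃ p : ℕ × ℕ, skyline E u p ∧ kv ≤ p.1 ∧ lv + 1 ≤ p.2} ∧
      lv + 1 ≤
        Set.ncard {u : V | E v u ∧ ∃ p : ℕ × ℕ, skyline E u p ∧ kv ≤ p.1 ∧ lv + 1 ≤ p.2}) := by
  rintro ⟨hin, hout⟩
  have hlt : (kv, lv) < (kv, lv + 1) := Prod.mk_lt_mk_iff_right.2 lv.lt_succ_self
  have hmem : v ∈ core E kv (lv + 1) :=
    mem_core_of_le_card (hin.trans (ncard_skyline_le_card_filter_core (E · v) kv (lv + 1)))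
      (hout.trans (ncard_skyline_le_card_filter_core (E v) kv (lv + 1)))
  exact h.notMem_core_of_lt hlt hmem
end
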